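/- arXiv:1901.10734 — 2 statements merged into one kernel-verified Lean document; each statement's English description precedes it below -/
import Mathlib

section
/- For a ∈ Z/q^eZ with a = b·q^{e−1}, gcd(b, q) = 1, q ≡ 1 (mod 4) prime, e odd, the eigenvalue sum Σ_{s∈Q} exp(2πi a s/q^e) equals ((b/q)·q^{e−1/2} − q^{e−1})/2, where Q is the set of squares of units of Z/q^eZ and (b/q) is the Legendre symbol. -/
open Complex Filter Topology in
lemma aux_theta_limit {ι : Type*} {l : Filter ι} (z : ℝ) (t : ι → ℂ)
    (ht : Tendsto (fun i => (t i).im) l atTop) :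
    Tendsto (fun i => jacobiTheta₂ z (t i)) l (𝓝 1) := by
  have h1 : (∑' n : ℤ, if n = 0 then (1 : ℂ) else 0) = 1 := by simp
  rw [← h1]
  unfold jacobiTheta₂
  have hs := summable_pow_mul_jacobiTheta₂_term_bound 0 one_pos 0
  refine tendsto_tsum_of_dominated_convergence hs ?_ ?_
  · intro n
    by_cases hn : n = 0
    · subst hn
      simpa [jacobiTheta₂_term] using tendsto_const_nhds
    · rw [if_neg hn, tendsto_zero_iff_norm_tendsto_zero]
      simp_rw [norm_jacobiTheta₂_term]
      simp only [ofReal_im, mul_zero, sub_zero]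
      apply Real.tendsto_exp_atBot.comp
      apply Tendsto.const_mul_atTop_of_neg _ ht
      have : (0:ℝ) < (n:ℝ)^2 := by positivity
      nlinarith [Real.pi_pos]
  · filter_upwards [ht.eventually_ge_atTop 1] with i hi n
    simpa using norm_jacobiTheta₂_term_le one_pos (z := z) (S := 0) (by simp) hi n

open Complex in
lemma aux_theta_decomp (N : ℕ) [NeZero N] (x τ : ℂ) (hx0 : x.im = 0) (hτ : 0 < τ.im)
    (hx : ∀ m r : ℤ, cexp (Real.pi * I * (r + m * N) ^ 2 * x) = cexp (Real.pi * I * r ^ 2 * x)) :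
    jacobiTheta₂ 0 (x + τ) = 1 / (-I * (N ^ 2 * τ)) ^ (1 / 2 : ℂ) *
      ∑ r : Fin N, cexp (Real.pi * I * (r : ℕ) ^ 2 * x) *
        jacobiTheta₂ (((r : ℕ) / N : ℝ) : ℂ) (-1 / (N ^ 2 * τ)) := by
  have hN : (N : ℂ) ≠ 0 := Nat.cast_ne_zero.mpr (NeZero.ne N)
  have hτ0 : τ ≠ 0 := by rintro rfl; simp at hτ
  have hsum : Summable (jacobiTheta₂_term · 0 (x + τ)) := by
    rw [summable_jacobiTheta₂_term_iff]; simpa [hx0] using hτ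
  unfold jacobiTheta₂ at *
  rw [← (Int.divModEquiv N).symm.tsum_eq]
  have hsum' : Summable (fun p : ℤ × Fin N => jacobiTheta₂_term ((Int.divModEquiv N).symm p) 0 (x + τ)) :=
    ((Int.divModEquiv N).symm.summable_iff (f := (jacobiTheta₂_term · 0 (x + τ)))).mpr hsum
  rw [← (Equiv.prodComm _ _).tsum_eq]
  have hsum2 : Summable (fun p : Fin N × ℤ => jacobiTheta₂_term
      ((Int.divModEquiv N).symm ((Equiv.prodComm (Fin N) ℤ) p)) 0 (x + τ)) :=
    (Equiv.prodComm (Fin N) ℤ).summable_iff.mpr hsum'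
  rw [hsum2.tsum_prod, tsum_fintype, Finset.mul_sum]
  refine Finset.sum_congr rfl fun r _ => ?_
  have hfe := jacobiTheta₂_functional_equation (((r : ℕ) : ℂ) * N * τ) (N ^ 2 * τ)
  have e1 : ((r : ℕ) : ℂ) * N * τ / (N ^ 2 * τ) = (((r : ℕ) / N : ℝ) : ℂ) := by
    push_cast; field_simp
  rw [e1] at hfe
  have e2 : (∑' n : ℤ, jacobiTheta₂_term n (((r : ℕ) / N : ℝ) : ℂ) (-1 / (N ^ 2 * τ))) = jacobiTheta₂ (((r : ℕ) / N : ℝ) : ℂ) (-1 / (N ^ 2 * τ)) := rfl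
  rw [e2]
  have e3 : -Real.pi * I * (((r : ℕ) : ℂ) * N * τ) ^ 2 / (N ^ 2 * τ) = - (Real.pi * I * (r : ℕ) ^ 2 * τ) := by
    field_simp
  rw [e3] at hfe
  have e4 : (1 / (-I * (N ^ 2 * τ)) ^ (1 / 2 : ℂ) * jacobiTheta₂ (((r : ℕ) / N : ℝ) : ℂ) (-1 / (N ^ 2 * τ)))
      = cexp (Real.pi * I * (r : ℕ) ^ 2 * τ) * jacobiTheta₂ (((r : ℕ) : ℂ) * N * τ) (N ^ 2 * τ) := by
    rw [hfe, exp_neg]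
    field_simp
  rw [mul_left_comm, e4, jacobiTheta₂, ← tsum_mul_left, ← tsum_mul_left]
  refine tsum_congr fun m => ?_
  have := hx m r
  simp only [Int.cast_natCast] at this
  rw [← this]
  simp only [jacobiTheta₂_term, Function.comp, Equiv.prodComm_apply, Prod.swap, Int.divModEquiv, Equiv.coe_fn_symm_mk, ← Complex.exp_add]
  congr 1
  push_cast
  ring

open Complex Filter Topology in
lemma aux_gauss (q : ℕ) (h4 : q % 4 = 1) :
    ∑ r : Fin q, cexp (Real.pi * I * (r : ℕ) ^ 2 * (2 / q)) = (Real.sqrt q : ℂ) := by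
  have hq0 : q ≠ 0 := by rintro rfl; simp at h4
  have : NeZero q := ⟨hq0⟩
  have hqC : (q : ℂ) ≠ 0 := Nat.cast_ne_zero.mpr hq0
  have hqR : (0 : ℝ) < q := by positivity
  have hper : ∀ (w : ℂ) (k : ℤ), cexp (w + k * (2 * Real.pi * I)) = cexp w := fun w k =>
    Complex.exp_periodic.int_mul k w
  set F : ℝ → ℂ := fun ε => ∑ r : Fin q, cexp (Real.pi * I * (r : ℕ) ^ 2 * (2 / q)) *
        jacobiTheta₂ (((r : ℕ) / q : ℝ) : ℂ) (-1 / (q ^ 2 * (ε * I))) with hF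
  set T : ℝ → ℂ := fun ε => q ^ 2 * (ε * I) / (2 * (2 + q * (ε * I))) with hT
  set H : ℝ → ℂ := fun ε => ∑ r : Fin 2, cexp (Real.pi * I * (r : ℕ) ^ 2 * (-q / 2)) *
        jacobiTheta₂ (((r : ℕ) / (2 : ℕ) : ℝ) : ℂ) (-1 / ((2 : ℕ) ^ 2 * T ε)) with hH
  have hd : ∀ ε : ℝ, 2 + (q : ℂ) * (ε * I) ≠ 0 := by
    intro ε h
    have := congrArg Complex.re h
    simp at this
  have hTinv : ∀ ε : ℝ, ε ≠ 0 → -1 / (((2 : ℕ) : ℂ) ^ 2 * T ε) = I * ((1 / (q ^ 2 * ε) : ℝ) : ℂ) - ((1 / (2 * q) : ℝ) : ℂ) := by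
    intro ε hε
    have hεC : (ε : ℂ) ≠ 0 := by exact_mod_cast hε
    have := hd ε
    simp only [hT]
    push_cast
    field_simp
    ring_nf
    simp only [I_sq]
    ring
  have hinv : ∀ ε : ℝ, ε ≠ 0 → -1 / ((q : ℂ) ^ 2 * (ε * I)) = I * ((1 / (q ^ 2 * ε) : ℝ) : ℂ) := by
    intro ε hε
    have hεC : (ε : ℂ) ≠ 0 := by exact_mod_cast hε
    push_cast
    field_simp
    simp
  have hlim : Tendsto (fun ε : ℝ => 1 / ((q : ℝ) ^ 2 * ε)) (𝓝[>] 0) atTop := by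
    have : (fun ε : ℝ => 1 / ((q : ℝ) ^ 2 * ε)) = fun ε => (1 / (q : ℝ) ^ 2) * ε⁻¹ := by
      ext ε; field_simp
    rw [this]
    exact Tendsto.const_mul_atTop (by positivity) tendsto_inv_nhdsGT_zero
  have hpos : ∀ᶠ ε : ℝ in 𝓝[>] 0, 0 < ε := eventually_mem_nhdsWithin
  have hFlim : Tendsto F (𝓝[>] 0) (𝓝 (∑ r : Fin q, cexp (Real.pi * I * (r : ℕ) ^ 2 * (2 / q)))) := by
    refine tendsto_finsetSum _ fun r _ => ?_
    conv => rhs; rw [← mul_one (cexp _)]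
    refine Tendsto.const_mul _ (aux_theta_limit _ _ (hlim.congr' ?_))
    filter_upwards [hpos] with ε hε
    rw [hinv ε hε.ne', I_mul_im, ofReal_re]
  have hHlim : Tendsto H (𝓝[>] 0) (𝓝 (∑ r : Fin 2, cexp (Real.pi * I * (r : ℕ) ^ 2 * (-q / 2)))) := by
    refine tendsto_finsetSum _ fun r _ => ?_
    conv => rhs; rw [← mul_one (cexp _)]
    refine Tendsto.const_mul _ (aux_theta_limit _ _ (hlim.congr' ?_))
    filter_upwards [hpos] with ε hε
    rw [hTinv ε hε.ne', sub_im, I_mul_im, ofReal_re, ofReal_im, sub_zero]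
  have hHval : ∑ r : Fin 2, cexp (Real.pi * I * (r : ℕ) ^ 2 * (-q / 2)) = 1 - I := by
    rw [Fin.sum_univ_two]
    obtain ⟨k, hk⟩ : ∃ k : ℕ, q = 4 * k + 1 := ⟨q / 4, by omega⟩
    have : (Real.pi * I * ((1 : Fin 2) : ℕ) ^ 2 * (-q / 2) : ℂ) = -(Real.pi / 2 * I) + ((-k : ℤ) : ℂ) * (2 * Real.pi * I) := by
      rw [hk]; push_cast; simp; ring
    rw [this, hper, exp_neg, Complex.exp_pi_div_two_mul_I]
    simp [sub_eq_add_neg]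
  have key : ∀ ε : ℝ, 0 < ε →
      F ε * (-I * (2 / q + ε * I)) ^ (1 / 2 : ℂ) * (2 / (2 + q * (ε * I))) ^ (1 / 2 : ℂ) = H ε := by
    intro ε hε
    have hεC : (ε : ℂ) ≠ 0 := by exact_mod_cast hε.ne'
    have hdε := hd ε
    have hTim : 0 < (T ε).im := by
      have h1 : 0 < (-1 / (((2 : ℕ) : ℂ) ^ 2 * T ε)).im := by
        rw [hTinv ε hε.ne', sub_im, I_mul_im, ofReal_re, ofReal_im, sub_zero]; positivity
      have hT0 : T ε ≠ 0 := by rintro h; simp [h] at h1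
      have h2 : -1 / (((2 : ℕ) : ℂ) ^ 2 * T ε) = ((-1/4 : ℝ) : ℂ) * (T ε)⁻¹ := by
        push_cast; field_simp; norm_num
      rw [h2, im_ofReal_mul, inv_im] at h1
      have hn : 0 < normSq (T ε) := normSq_pos.mpr hT0
      by_contra hcon
      have : 0 ≤ -(T ε).im / normSq (T ε) := div_nonneg (by linarith) hn.le
      linarith
    have d1 := aux_theta_decomp q (2 / q) (ε * I) (by
        have : (2 / q : ℂ) = ((2 / q : ℝ) : ℂ) := by push_cast; rfl
        rw [this, ofReal_im]) (by simpa using hε) (by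
      intro m r
      rw [← hper (Real.pi * I * r ^ 2 * (2 / q)) (2 * r * m + m ^ 2 * q)]
      congr 1
      push_cast
      field_simp
      ring)
    have d2 := aux_theta_decomp 2 (-q / 2) (T ε) (by
        have : (-q / 2 : ℂ) = ((-q / 2 : ℝ) : ℂ) := by push_cast; rfl
        rw [this, ofReal_im]) hTim (by
      intro m r
      rw [← hper (Real.pi * I * r ^ 2 * (-q / 2)) (-q * (r * m + m ^ 2))]
      congr 1
      push_cast
      ring)
    have d3 := jacobiTheta₂_functional_equation 0 (2 / q + ε * I)
    have hx0 : (2 / q + ε * I : ℂ) ≠ 0 := by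
      intro h
      have := congrArg Complex.im h
      have e : (2 / q : ℂ) = ((2 / q : ℝ) : ℂ) := by push_cast; rfl
      rw [e] at this
      simp at this
      exact hε.ne' this
    have e1 : -1 / (2 / q + ε * I : ℂ) = -q / 2 + T ε := by
      have : (2 / q + ε * I : ℂ) = (2 + q * (ε * I)) / q := by field_simp
      rw [this]
      have hd2 : 2 + (q : ℂ) * ε * I ≠ 0 := by rw [mul_assoc]; exact hdε
      simp only [hT]
      field_simp
      ring
    have e2 : -I * (((2 : ℕ) : ℂ) ^ 2 * T ε) = ((q ^ 2 * ε : ℝ) : ℂ) * (2 / (2 + q * (ε * I))) := by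
      simp only [hT]
      push_cast
      field_simp
      ring_nf
      simp only [I_sq]
      ring
    have e3 : -I * ((q : ℂ) ^ 2 * (ε * I)) = ((q ^ 2 * ε : ℝ) : ℂ) := by
      push_cast
      linear_combination (-(q : ℂ) ^ 2 * ε) * I_sq
    have hqε : 0 < (q : ℝ) ^ 2 * ε := by positivity
    have h2 : (2 / (2 + q * (ε * I)) : ℂ) ≠ 0 := div_ne_zero two_ne_zero hdε
    have e4 : (((q ^ 2 * ε : ℝ) : ℂ) * (2 / (2 + q * (ε * I)))) ^ (1 / 2 : ℂ)
       = ((q ^ 2 * ε : ℝ) : ℂ) ^ (1 / 2 : ℂ) * (2 / (2 + q * (ε * I))) ^ (1 / 2 : ℂ) := by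
      have hne : ((q ^ 2 * ε : ℝ) : ℂ) ≠ 0 := by exact_mod_cast hqε.ne'
      rw [cpow_def_of_ne_zero (mul_ne_zero hne h2), cpow_def_of_ne_zero hne, cpow_def_of_ne_zero h2,
        log_ofReal_mul hqε h2, ← exp_add, ofReal_log hqε.le]
      congr 1; ring
    have n1 : ((q ^ 2 * ε : ℝ) : ℂ) ^ (1 / 2 : ℂ) ≠ 0 := by
      rw [Ne, cpow_eq_zero_iff, not_and_or]; left; exact_mod_cast hqε.ne'
    have n2 : (2 / (2 + q * (ε * I)) : ℂ) ^ (1 / 2 : ℂ) ≠ 0 := by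
      rw [Ne, cpow_eq_zero_iff, not_and_or]; left; exact h2
    have n3 : (-I * (2 / q + ε * I) : ℂ) ^ (1 / 2 : ℂ) ≠ 0 := by
      rw [Ne, cpow_eq_zero_iff, not_and_or]; left; exact mul_ne_zero (neg_ne_zero.mpr I_ne_zero) hx0
    rw [e3] at d1
    rw [e2, e4] at d2
    rw [e1, d1, zero_div, d2] at d3
    change 1 / _ * F ε = _ * _ * (_ * H ε) at d3
    simp only [ne_eq, OfNat.ofNat_ne_zero, not_false_eq_true, zero_pow, mul_zero, zero_div, exp_zero, mul_one] at d3
    generalize ((q ^ 2 * ε : ℝ) : ℂ) ^ (1 / 2 : ℂ) = X at *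
    generalize (2 / (2 + q * (ε * I)) : ℂ) ^ (1 / 2 : ℂ) = Y at *
    generalize (-I * (2 / q + ε * I) : ℂ) ^ (1 / 2 : ℂ) = Z at *
    field_simp at d3
    rw [← d3]
  have hsl : (-I * (2 / q + ((0 : ℝ) : ℂ) * I)) ∈ slitPlane := by
    right
    have e : (2 / q : ℂ) = ((2 / q : ℝ) : ℂ) := by push_cast; rfl
    rw [e]
    simp [hq0]
  have c1 : ContinuousAt (fun ε : ℝ => (-I * (2 / q + ε * I) : ℂ) ^ (1 / 2 : ℂ)) 0 := by
    refine ContinuousAt.cpow (by fun_prop) continuousAt_const hsl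
  have c2 : ContinuousAt (fun ε : ℝ => (2 / (2 + q * (ε * I)) : ℂ) ^ (1 / 2 : ℂ)) 0 := by
    refine ContinuousAt.cpow (ContinuousAt.div (by fun_prop) (by fun_prop) (hd 0)) continuousAt_const ?_
    simp
  have hlimL := (hFlim.mul (c1.tendsto.mono_left nhdsWithin_le_nhds)).mul
    (c2.tendsto.mono_left nhdsWithin_le_nhds)
  have hlimR := hHlim.congr' (f₂ := fun ε : ℝ => F ε * (-I * (2 / q + ε * I)) ^ (1 / 2 : ℂ) * (2 / (2 + q * (ε * I))) ^ (1 / 2 : ℂ)) (by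
    filter_upwards [hpos] with ε hε
    exact (key ε hε).symm)
  have heq := tendsto_nhds_unique hlimL hlimR
  rw [hHval] at heq
  have hs : (Real.sqrt q : ℂ) ^ 2 = q := by
    rw [← ofReal_pow, Real.sq_sqrt hqR.le]; simp
  have hs0 : (Real.sqrt q : ℂ) ≠ 0 := by
    intro h; rw [h] at hs; apply hqC; rw [← hs]; simp
  have hroot : (-I * (2 / q + ((0 : ℝ) : ℂ) * I)) ^ (1 / 2 : ℂ) = (1 - I) / Real.sqrt q := by
    have : (-I * (2 / q + ((0 : ℝ) : ℂ) * I)) = ((1 - I) / Real.sqrt q) ^ 2 := by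
      rw [div_pow, hs]
      field_simp
      simp
      linear_combination -I_sq
    rw [this, one_div, sq_cpow_two_inv]
    rw [div_ofReal_re]
    simp
    exact Nat.pos_of_ne_zero hq0
  have hone : (2 / (2 + q * (((0 : ℝ) : ℂ) * I)) : ℂ) ^ (1 / 2 : ℂ) = 1 := by simp
  rw [hroot, hone, mul_one] at heq
  have h1I : (1 - I : ℂ) ≠ 0 := by
    intro h; have := congrArg Complex.re h; simp at this
  generalize ∑ r : Fin q, cexp (Real.pi * I * (r : ℕ) ^ 2 * (2 / q)) = G at *
  field_simp at heq
  exact heq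

open Complex in
lemma aux_gauss_std (q : ℕ) [Fact q.Prime] (h4 : q % 4 = 1) :
    ∑ x : ZMod q, ZMod.stdAddChar (x ^ 2) = (Real.sqrt q : ℂ) := by
  rw [← aux_gauss q h4]
  have h : ∀ x : ZMod q, ZMod.stdAddChar (x ^ 2) =
      cexp (Real.pi * I * (x.val : ℂ) ^ 2 * (2 / q)) := by
    intro x
    have h : x ^ 2 = ((((x.val : ℕ) : ℤ) ^ 2 : ℤ) : ZMod q) := by
      push_cast
      rw [ZMod.natCast_zmod_val]
    rw [h, ZMod.stdAddChar_coe]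
    congr 1
    push_cast
    ring
  simp_rw [h]
  clear h
  obtain ⟨n, rfl⟩ : ∃ n, q = n + 1 := ⟨q - 1, by omega⟩
  rfl

lemma aux_sum_sq (q : ℕ) [Fact q.Prime] (h2 : q ≠ 2) (ψ : AddChar (ZMod q) ℂ) (hψ : ψ ≠ 1) :
    ∑ x : ZMod q, ψ (x ^ 2) =
      gaussSum ((quadraticChar (ZMod q)).ringHomComp (Int.castRingHom ℂ)) ψ := by
  have h0 : ∑ a, ψ a = 0 := AddChar.sum_eq_zero_of_ne_one hψ
  have h1 : ∑ x : ZMod q, ψ (x ^ 2) = ∑ a : ZMod q, ((quadraticChar (ZMod q) a : ℂ) + 1) * ψ a := by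
    rw [← Finset.sum_fiberwise (s := Finset.univ) (g := fun x : ZMod q => x ^ 2)]
    refine Finset.sum_congr rfl fun a _ => ?_
    rw [Finset.sum_congr rfl (g := fun _ => ψ a)
      (fun x hx => by rw [(Finset.mem_filter.mp hx).2])]
    rw [Finset.sum_const, nsmul_eq_mul]
    congr 1
    have := quadraticChar_card_sqrts (F := ZMod q) (by rwa [ZMod.ringChar_zmod_n]) a
    rw [show (({x : ZMod q | x ^ 2 = a}.toFinset)) = Finset.univ.filter (fun x : ZMod q => x ^ 2 = a) by ext; simp] at this
    have := congrArg (Int.cast : ℤ → ℂ) this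
    push_cast at this
    exact this
  rw [h1, gaussSum]
  simp_rw [add_mul, one_mul, Finset.sum_add_distrib, h0, add_zero]
  rfl

lemma aux_gauss_b (q b : ℕ) [Fact q.Prime] (h4 : q % 4 = 1) (hb : Nat.Coprime b q) :
    ∑ x : ZMod q, ZMod.stdAddChar ((b : ZMod q) * x ^ 2) =
      (legendreSym q b : ℂ) * (Real.sqrt q : ℂ) := by
  have h2 : q ≠ 2 := by rintro rfl; simp at h4
  have hψ : (ZMod.stdAddChar : AddChar (ZMod q) ℂ) ≠ 1 := by
    intro h
    have := ZMod.injective_stdAddChar (N := q) (a₁ := 0) (a₂ := 1) (by rw [h]; simp)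
    simp at this
  let u : (ZMod q)ˣ := ZMod.unitOfCoprime b hb
  have hψb : (ZMod.stdAddChar : AddChar (ZMod q) ℂ).mulShift (b : ZMod q) ≠ 1 := by
    intro h
    have h' : (ZMod.stdAddChar : AddChar (ZMod q) ℂ) ((b : ZMod q) * 1) = 1 := by
      rw [← AddChar.mulShift_apply, h]; simp
    have := ZMod.injective_stdAddChar (N := q) (a₁ := (b : ZMod q) * 1) (a₂ := 0) (by rw [h']; simp)
    rw [mul_one] at this
    exact u.ne_zero this
  have e1 := aux_sum_sq q h2 _ hψb
  simp_rw [AddChar.mulShift_apply] at e1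
  rw [e1, ← aux_gauss_std q h4, aux_sum_sq q h2 _ hψ]
  have e2 := gaussSum_mulShift ((quadraticChar (ZMod q)).ringHomComp (Int.castRingHom ℂ)) ZMod.stdAddChar u
  change (((quadraticChar (ZMod q) (b : ZMod q)) : ℤ) : ℂ) * gaussSum _ (ZMod.stdAddChar.mulShift (b : ZMod q)) = _ at e2
  rw [← e2, ← mul_assoc]
  have e3 : legendreSym q b = quadraticChar (ZMod q) (b : ZMod q) := by
    rw [legendreSym]; push_cast; rfl
  have e4 : (quadraticChar (ZMod q) (b : ZMod q)) ^ 2 = 1 :=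
    quadraticChar_sq_one (F := ZMod q) u.ne_zero
  have e5 : (((quadraticChar (ZMod q) (b : ZMod q)) : ℤ) : ℂ) * ((quadraticChar (ZMod q) (b : ZMod q) : ℤ) : ℂ) = 1 := by
    rw [← sq]; exact_mod_cast e4
  rw [e3, e5, one_mul]

lemma aux_isUnit (q e : ℕ) [Fact q.Prime] (he : e ≠ 0) (x : ZMod (q ^ e)) :
    IsUnit x ↔ ZMod.castHom (dvd_pow_self q he) (ZMod q) x ≠ 0 := by
  have hp : q.Prime := Fact.out
  have : NeZero (q ^ e) := ⟨pow_ne_zero _ hp.ne_zero⟩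
  conv_lhs => rw [← ZMod.natCast_zmod_val x]
  rw [ZMod.isUnit_iff_coprime, Nat.coprime_pow_right_iff (Nat.pos_of_ne_zero he), Nat.coprime_comm,
    hp.coprime_iff_not_dvd, ← ZMod.natCast_eq_zero_iff, ZMod.castHom_apply, ZMod.natCast_val]

lemma aux_fiber (q e : ℕ) [Fact q.Prime] (he : e ≠ 0) (f : ZMod q → ℂ) :
    haveI : NeZero (q ^ e) := ⟨pow_ne_zero _ (Fact.out : q.Prime).ne_zero⟩
    ∑ x : ZMod (q ^ e), f (ZMod.castHom (dvd_pow_self q he) (ZMod q) x)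
      = (q : ℂ) ^ (e - 1) * ∑ r : ZMod q, f r := by
  have hp : q.Prime := Fact.out
  have : NeZero (q ^ e) := ⟨pow_ne_zero _ hp.ne_zero⟩
  set φ := ZMod.castHom (dvd_pow_self q he) (ZMod q)
  have hφ : Function.Surjective φ := ZMod.castHom_surjective _
  have hc : ∀ r : ZMod q, (Finset.univ.filter (fun x => φ x = r)).card =
      (Finset.univ.filter (fun x => φ x = 0)).card := fun r =>
    AddMonoidHom.card_fiber_eq_of_mem_range φ.toAddMonoidHom (hφ r) (hφ 0)
  have hcard : (Finset.univ.filter (fun x => φ x = 0)).card = q ^ (e - 1) := by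
    have h := Finset.card_eq_sum_card_fiberwise (s := (Finset.univ : Finset (ZMod (q ^ e))))
      (t := (Finset.univ : Finset (ZMod q))) (f := φ) (by intro x _; simp)
    simp_rw [hc] at h
    rw [Finset.sum_const, Finset.card_univ, Finset.card_univ, ZMod.card, ZMod.card, smul_eq_mul] at h
    have : q ^ e = q * q ^ (e - 1) := by rw [← pow_succ']; congr 1; omega
    exact (Nat.eq_of_mul_eq_mul_left hp.pos (this.symm.trans h)).symm
  rw [← Finset.sum_fiberwise (s := Finset.univ) (g := fun x => φ x), Finset.mul_sum]
  refine Finset.sum_congr rfl fun r _ => ?_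
  rw [Finset.sum_congr rfl (g := fun _ => f r)
      (fun x hx => by rw [(Finset.mem_filter.mp hx).2])]
  rw [Finset.sum_const, hc, hcard, nsmul_eq_mul]
  push_cast
  rfl

/-- For a = b·q^{e−1} with gcd(b,q) = 1, q ≡ 1 (mod 4) prime and e odd, the
eigenvalue sum Σ_{s ∈ Q} exp(2πi a s/q^e) over the set Q of squares of units of ℤ/q^eℤ
equals ((b/q)·q^{e−1/2} − q^{e−1})/2, with (b/q) the Legendre symbol. -/
theorem stmt_15 (q e b : ℕ) [Fact q.Prime] (h4 : q % 4 = 1) (he : Odd e) (he1 : 1 ≤ e)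
    (hb : Nat.Coprime b q) :
    ∑ s ∈ Finset.univ.filter
        (fun x : ZMod (q ^ e) => ∃ u : (ZMod (q ^ e))ˣ, (u : ZMod (q ^ e)) ^ 2 = x),
        Complex.exp (2 * Real.pi * Complex.I * ((b * q ^ (e - 1) : ℕ) : ℂ) * (s.val : ℂ)
          / (q : ℂ) ^ e)
      = ((legendreSym q b : ℂ) * (q : ℂ) ^ (e - 1) * (Real.sqrt q : ℂ) - (q : ℂ) ^ (e - 1)) / 2 := by
  classical
  have hp : q.Prime := Fact.out
  have he0 : e ≠ 0 := by omega
  have hqC : (q : ℂ) ≠ 0 := Nat.cast_ne_zero.mpr hp.ne_zero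
  have hpow : (q : ℂ) ^ e = q * q ^ (e - 1) := by rw [← pow_succ']; congr 1; omega
  set φ := ZMod.castHom (dvd_pow_self q he0) (ZMod q) with hφ
  have hU : ∀ x : ZMod (q ^ e), IsUnit x ↔ φ x ≠ 0 := aux_isUnit q e he0
  have hq2 : q ≠ 2 := by rintro rfl; simp at h4
  have h2 : (2 : ZMod q) ≠ 0 := by
    intro h
    have : ((2 : ℕ) : ZMod q) = 0 := by exact_mod_cast h
    rw [ZMod.natCast_eq_zero_iff] at this
    exact hq2 ((Nat.prime_dvd_prime_iff_eq hp Nat.prime_two).mp this)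
  -- rewriting the terms
  have hterm : ∀ s : ZMod (q ^ e), Complex.exp (2 * Real.pi * Complex.I *
      ((b * q ^ (e - 1) : ℕ) : ℂ) * (s.val : ℂ) / (q : ℂ) ^ e)
      = ZMod.stdAddChar ((b : ZMod q) * φ s) := by
    intro s
    have : (b : ZMod q) * φ s = (((b * s.val : ℕ) : ℤ) : ZMod q) := by
      push_cast
      rw [hφ, ZMod.castHom_apply, ZMod.natCast_val]
    rw [this, ZMod.stdAddChar_coe, hpow]
    congr 1
    push_cast
    field_simp
  rw [Finset.sum_congr rfl (fun s _ => hterm s)]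
  set Q := Finset.univ.filter
        (fun x : ZMod (q ^ e) => ∃ u : (ZMod (q ^ e))ˣ, (u : ZMod (q ^ e)) ^ 2 = x) with hQ
  -- two square roots
  have hdouble : ∑ x : ZMod (q ^ e) with IsUnit x, (ZMod.stdAddChar ((b : ZMod q) * φ (x ^ 2)) : ℂ)
      = 2 * ∑ s ∈ Q, ZMod.stdAddChar ((b : ZMod q) * φ s) := by
    rw [← Finset.sum_fiberwise_of_maps_to (t := Q) (g := fun x => x ^ 2), Finset.mul_sum]
    · refine Finset.sum_congr rfl fun s hs => ?_
      rw [Finset.sum_congr rfl (g := fun _ => ZMod.stdAddChar ((b : ZMod q) * φ s))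
        (fun x hx => by rw [(Finset.mem_filter.mp hx).2])]
      rw [Finset.sum_const, nsmul_eq_mul]
      congr 1
      obtain ⟨u, hu⟩ := (Finset.mem_filter.mp hs).2
      have huφ : φ u ≠ 0 := (hU _).mp u.isUnit
      have : ((Finset.univ.filter (fun x : ZMod (q ^ e) => IsUnit x)).filter (fun x => x ^ 2 = s))
          = {(u : ZMod (q ^ e)), -(u : ZMod (q ^ e))} := by
        ext x
        simp only [Finset.mem_filter, Finset.mem_univ, true_and, Finset.mem_insert,
          Finset.mem_singleton]
        constructor
        · rintro ⟨hx, hxs⟩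
          have hprod : (x - u) * (x + u) = 0 := by
            rw [← hu] at hxs
            linear_combination hxs
          by_cases hm : IsUnit (x - u)
          · right
            exact eq_neg_of_add_eq_zero_left (hm.mul_right_eq_zero.mp hprod)
          · left
            have hm0 : φ x = φ u := by
              rw [hU, not_not, map_sub] at hm
              exact sub_eq_zero.mp hm
            have hpu : IsUnit (x + u) := by
              rw [hU, map_add, hm0, ← two_mul]
              exact mul_ne_zero h2 huφ
            exact sub_eq_zero.mp (hpu.mul_left_eq_zero.mp hprod)
        · rintro (rfl | rfl)
          · exact ⟨u.isUnit, hu⟩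
          · exact ⟨u.isUnit.neg, by rw [neg_sq, hu]⟩
      rw [this, Finset.card_pair]
      · norm_num
      · intro h
        have := congrArg φ h
        rw [map_neg, eq_neg_iff_add_eq_zero, ← two_mul] at this
        exact mul_ne_zero h2 huφ this
    · intro x hx
      obtain ⟨u, rfl⟩ := (Finset.mem_filter.mp hx).2
      exact Finset.mem_filter.mpr ⟨Finset.mem_univ _, u, rfl⟩
  have hfib := aux_fiber q e he0 (fun r => if r ≠ 0 then (ZMod.stdAddChar ((b : ZMod q) * r ^ 2) : ℂ) else 0)
  have hlhs : ∑ x : ZMod (q ^ e) with IsUnit x, (ZMod.stdAddChar ((b : ZMod q) * φ (x ^ 2)) : ℂ)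
      = (q : ℂ) ^ (e - 1) * ∑ r : ZMod q, if r ≠ 0 then (ZMod.stdAddChar ((b : ZMod q) * r ^ 2) : ℂ) else 0 := by
    rw [← hfib, Finset.sum_filter]
    convert rfl using 2 with x
    simp only [hU, map_pow, hφ]
  have hG : ∑ r : ZMod q, (if r ≠ 0 then (ZMod.stdAddChar ((b : ZMod q) * r ^ 2) : ℂ) else 0)
      = (legendreSym q b : ℂ) * (Real.sqrt q : ℂ) - 1 := by
    rw [← aux_gauss_b q b h4 hb, ← Finset.sum_filter, Finset.filter_ne',
      ← Finset.add_sum_erase Finset.univ _ (Finset.mem_univ (0 : ZMod q))]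
    simp
  rw [hdouble, hG] at hlhs
  linear_combination hlhs / 2
end

section
/- For a d-regular graph G on n vertices, the Cheeger constant h(G) := min{e(S, V\S)/|S| : S ⊆ V, |S| ≤ n/2} satisfies h(G) ≥ (d − λ_2(G))/2. -/
open SimpleGraph in
/-- Cheeger inequality, easy direction: For a d-regular graph G with lam2 an
upper bound for every adjacency eigenvalue possessing a mean-zero eigenvector (in particular
lam2 ≥ λ₂(G)), every nonempty S with |S| ≤ n/2 satisfies e(S, V∖S)/|S| ≥ (d − λ₂)/2; i.e.
the Cheeger constant h(G) satisfies h(G) ≥ (d − λ₂(G))/2. -/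
theorem stmt_18 {V : Type*} [Fintype V] [DecidableEq V] (G : SimpleGraph V)
    [DecidableRel G.Adj] (d : ℕ) (hd : G.IsRegularOfDegree d) (lam2 : ℝ)
    (hlam2 : ∀ (μ : ℝ) (v : V → ℝ), v ≠ 0 → (∑ x, v x) = 0 →
      (adjMatrix ℝ G).mulVec v = μ • v → μ ≤ lam2)
    (S : Finset V) (hS : S.Nonempty) (hS2 : 2 * S.card ≤ Fintype.card V) :
    ((d : ℝ) - lam2) / 2
      ≤ (∑ x ∈ S, ∑ y ∈ Sᶜ, if G.Adj x y then (1 : ℝ) else 0) / (S.card : ℝ) := by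
  have hs : (0 : ℝ) < S.card := by exact_mod_cast hS.card_pos
  have hs2 : 2 * (S.card : ℝ) ≤ Fintype.card V := by exact_mod_cast hS2
  have hn : (0 : ℝ) < Fintype.card V := by linarith
  have he0 : 0 ≤ ∑ x ∈ S, ∑ y ∈ Sᶜ, if G.Adj x y then (1 : ℝ) else 0 :=
    Finset.sum_nonneg fun x _ => Finset.sum_nonneg fun y _ => by split_ifs <;> norm_num
  rcases le_total (d : ℝ) lam2 with hle | hle
  · exact le_trans (by linarith) (div_nonneg he0 hs.le)
  set c : ℝ := ((d : ℝ) - lam2) / Fintype.card V with hc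
  have hcn : c * Fintype.card V = d - lam2 := by rw [hc]; field_simp
  -- rank-one perturbation making every eigenvalue nonnegative
  let N : Matrix V V ℝ := lam2 • (1 : Matrix V V ℝ) - adjMatrix ℝ G + c • Matrix.of (fun _ _ => 1)
  have hNv : ∀ (v : V → ℝ) (x : V),
      N.mulVec v x = lam2 * v x - (adjMatrix ℝ G).mulVec v x + c * ∑ y, v y := by
    intro v x
    simp only [N, Matrix.add_mulVec, Matrix.sub_mulVec, Matrix.smul_mulVec, Matrix.one_mulVec,
      Pi.add_apply, Pi.sub_apply, Pi.smul_apply, smul_eq_mul]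
    congr 2
    simp [Matrix.mulVec, dotProduct]
  have hrow : ∀ y, ∑ x, (if G.Adj x y then (1 : ℝ) else 0) = d := by
    intro y
    have h := G.degree_eq_sum_if_adj (R := ℝ) y
    rw [hd y] at h
    rw [h]
    exact Finset.sum_congr rfl fun x _ => by simp [G.adj_comm]
  have hAsum : ∀ v : V → ℝ, ∑ x, (adjMatrix ℝ G).mulVec v x = d * ∑ y, v y := by
    intro v
    simp only [Matrix.mulVec, dotProduct, adjMatrix_apply]
    rw [Finset.sum_comm, Finset.mul_sum]
    exact Finset.sum_congr rfl fun y _ => by rw [← Finset.sum_mul, hrow]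
  have hH : N.IsHermitian := by
    ext i j
    simp [N, Matrix.one_apply, G.adj_comm, eq_comm]
  have hP : N.PosSemidef := by
    rw [hH.posSemidef_iff_eigenvalues_nonneg]
    intro i
    set v : V → ℝ := ⇑(hH.eigenvectorBasis i) with hv
    have hev : N.mulVec v = hH.eigenvalues i • v := hH.mulVec_eigenvectorBasis i
    have hv0 : v ≠ 0 := by
      intro h
      apply hH.eigenvectorBasis.orthonormal.ne_zero i
      ext x
      exact congrFun h x
    have hevx : ∀ x, lam2 * v x - (adjMatrix ℝ G).mulVec v x + c * ∑ y, v y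
        = hH.eigenvalues i * v x := by
      intro x
      rw [← hNv, hev]; simp
    show 0 ≤ hH.eigenvalues i
    by_cases h0 : ∑ x, v x = 0
    · have := hlam2 (lam2 - hH.eigenvalues i) v hv0 h0 (by
        ext x
        have := hevx x
        rw [h0] at this
        simp only [Pi.smul_apply, smul_eq_mul]
        linarith)
      linarith
    · have hsum := Finset.sum_congr (rfl : (Finset.univ : Finset V) = _) fun x _ => hevx x
      rw [Finset.sum_add_distrib, Finset.sum_sub_distrib, ← Finset.mul_sum, ← Finset.mul_sum,
        hAsum, Finset.sum_const, Finset.card_univ, nsmul_eq_mul] at hsum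
      have : hH.eigenvalues i * ∑ x, v x = 0 := by
        rw [Finset.mul_sum, ← hsum]; linear_combination (∑ x, v x) * hcn
      rcases mul_eq_zero.1 this with h | h
      · exact h.ge
      · exact absurd h h0
  have hq := hP.dotProduct_mulVec_nonneg (fun x => if x ∈ S then (1 : ℝ) else 0)
  have hin : ∀ x, (adjMatrix ℝ G).mulVec (fun x => if x ∈ S then (1 : ℝ) else 0) x
      = d - ∑ y ∈ Sᶜ, if G.Adj x y then (1 : ℝ) else 0 := by
    intro x
    have h := hrow x
    rw [← Finset.sum_add_sum_compl S] at h
    simp only [G.adj_comm _ x] at h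
    rw [← h]
    simp [Matrix.mulVec, dotProduct, adjMatrix_apply]
  have hq2 : 0 ≤ ∑ x ∈ S, (lam2 - (d - ∑ y ∈ Sᶜ, if G.Adj x y then (1 : ℝ) else 0)
      + c * S.card) := by
    refine hq.trans_eq ?_
    simp only [dotProduct, hNv, hin, star_trivial, ite_mul, one_mul, zero_mul, Finset.sum_ite_mem,
      Finset.univ_inter]
    exact Finset.sum_congr rfl fun x hx => by simp [hx]
  rw [Finset.sum_add_distrib, Finset.sum_sub_distrib, Finset.sum_sub_distrib] at hq2
  simp only [Finset.sum_const, nsmul_eq_mul] at hq2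
  have hc0 : 0 ≤ c := div_nonneg (by linarith) hn.le
  rw [le_div_iff₀ hs]
  have h1 : c * (2 * S.card) ≤ d - lam2 := hcn ▸ mul_le_mul_of_nonneg_left hs2 hc0
  nlinarith [mul_le_mul_of_nonneg_left h1 hs.le]
end
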